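/- For every real number m > 0, the function r̂ ↦ m·(1 − √(r̂² − 1))/(r̂ − √(r̂² − 1)) is strictly decreasing on the interval [1, ∞); in particular it attains its maximum over [1, ∞) at r̂ = 1, where its value is m. -/

import Mathlib

/-!
With `s = √(r² - 1)` and `u = r + s` one has `(r - s) * u = 1`, so the quotient equals
`m * (1 - s) * u = m * (1 - (u - 1)² / 2)`. Since `u ≥ 1` is strictly increasing in `r` on
`[1, ∞)` and equals `1` at `r = 1`, strict monotonicity and the maximum both follow.
-/

theorem quotient_eq (m r : ℝ) (hr : 1 ≤ r) :
    m * (1 - Real.sqrt (r ^ 2 - 1)) / (r - Real.sqrt (r ^ 2 - 1)) =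
      m * (1 - (r + Real.sqrt (r ^ 2 - 1) - 1) ^ 2 / 2) := by
  have hs : Real.sqrt (r ^ 2 - 1) ^ 2 = r ^ 2 - 1 := Real.sq_sqrt (by nlinarith)
  set s := Real.sqrt (r ^ 2 - 1)
  have hmul : (r - s) * (r + s) = 1 := by linear_combination -hs
  have hne : r - s ≠ 0 := left_ne_zero_of_mul_eq_one hmul
  rw [div_eq_iff hne]
  linear_combination -(m * (1 - s)) * hmul +
    -(m * (r - s) / 2) * hs

theorem stmt_14 (m : ℝ) (hm : 0 < m) :
    StrictAntiOn
      (fun r : ℝ => m * (1 - Real.sqrt (r ^ 2 - 1)) / (r - Real.sqrt (r ^ 2 - 1)))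
      (Set.Ici 1) ∧
    (fun r : ℝ => m * (1 - Real.sqrt (r ^ 2 - 1)) / (r - Real.sqrt (r ^ 2 - 1))) 1 = m ∧
    ∀ r ∈ Set.Ici (1 : ℝ),
      m * (1 - Real.sqrt (r ^ 2 - 1)) / (r - Real.sqrt (r ^ 2 - 1)) ≤ m := by
  refine ⟨?_, by simp, ?_⟩
  · intro a ha b hb hab
    rw [Set.mem_Ici] at ha hb
    simp only [quotient_eq m a ha, quotient_eq m b hb]
    have hsqrt : Real.sqrt (a ^ 2 - 1) ≤ Real.sqrt (b ^ 2 - 1) :=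
      Real.sqrt_le_sqrt (by nlinarith)
    have hnonneg := Real.sqrt_nonneg (a ^ 2 - 1)
    refine mul_lt_mul_of_pos_left ?_ hm
    have hsq : (a + Real.sqrt (a ^ 2 - 1) - 1) ^ 2 < (b + Real.sqrt (b ^ 2 - 1) - 1) ^ 2 :=
      pow_lt_pow_left₀ (by linarith) (by linarith) two_ne_zero
    linarith
  · intro r hr
    rw [quotient_eq m r hr]
    nlinarith [mul_nonneg hm.le (sq_nonneg (r + Real.sqrt (r ^ 2 - 1) - 1))]
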